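/- Let I and J be closed left ideals of C*-algebras A and B respectively, and let φ : I → J be a bijective linear map which is completely isometric. Then φ is multiplicative (φ(x * y) = φ(x) * φ(y) for all x, y ∈ I) if and only if there exists a net (e_i)_{i ∈ ι} in I, indexed by a nonempty directed set ι, with ‖e_i‖ ≤ 1 for all i, such that ‖x * e_i − x‖ → 0 for every x ∈ I and ‖y * φ(e_i) − y‖ → 0 for every y ∈ J (i.e., (e_i) is a right contractive approximate identity for I whose image under φ is a right contractive approximate identity for J). -/

import Mathlib

open Filter Topology

/-- The canonical C*-norm of an `n × n` matrix over a (possibly non-unital) C*-algebra `A`: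
the operator norm of left multiplication on the Hilbert `A`-module of columns `Aⁿ`.
(This is the unique C*-norm on `Mₙ(A)`.) -/
noncomputable def cnorm {A : Type*} [NonUnitalCStarAlgebra A] {n : ℕ}
    (x : Matrix (Fin n) (Fin n) A) : ℝ :=
  sSup {r : ℝ | ∃ v : Fin n → A, ‖∑ i, star (v i) * v i‖ ≤ 1 ∧
    r = Real.sqrt ‖∑ i, star (x.mulVec v i) * (x.mulVec v i)‖}

/-- A map `T` defined on a subspace `V` of a C*-algebra `A`, with values in a C*-algebra `B`,
is completely isometric if for every `n`, applying `T` entrywise to `n × n` matrices with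
entries in `V` preserves the canonical C*-norm of matrices. -/
def IsCompletelyIsometric {A B : Type*} [NonUnitalCStarAlgebra A] [NonUnitalCStarAlgebra B]
    {V : Submodule ℂ A} (T : V → B) : Prop :=
  ∀ (n : ℕ) (x : Matrix (Fin n) (Fin n) V),
    cnorm (x.map T) = cnorm (x.map ((↑) : V → A))
/-- A net in `α`: a function on a nonempty directed preordered index type. -/
structure DirectedNet.{w, u} (α : Type u) : Type (max u (w + 1)) where
  ι : Type w
  [pre : Preorder ι]
  [ne : Nonempty ι]
  dir : IsDirected ι (· ≤ ·)
  elem : ι → α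

attribute [instance] DirectedNet.pre DirectedNet.ne

/-!
A left ideal `I` is a Hilbert module over the C*-algebra `I ∩ I*` with inner product `x* y`.
A positive element is determined by the norms of its sums with positive elements, so preserving the
norms of columns of length two already makes `x* x ↦ φ(x)* φ(x)` well defined. As unitaries `u`
satisfy `(u x)* (u x) = x* x` and span the unitization of `A`, polarization yields
`φ(x)* φ(a y) = φ(a* x)* φ(y)`. Applying this to `φ` and to `φ⁻¹`, and cutting down by the
approximate identities, gives `φ(x a* y) = φ(x) φ(a)* φ(y)`; letting `a` run through the
approximate identity of `I` gives multiplicativity.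
-/

section NormEstimates

variable {A : Type*} [NonUnitalCStarAlgebra A]

lemma norm_mul_sub_sq_le (x : A) {e : A} (he : ‖e‖ ≤ 1) :
    ‖x * e - x‖ ^ 2 ≤ 2 * ‖star x * x * e - star x * x‖ := by
  set c := star x * x * e - star x * x with hc
  have expand : star (x * e - x) * (x * e - x) = star e * c - c := by
    simp only [hc, star_sub, star_mul, mul_sub, sub_mul, mul_assoc]
    abel
  calc ‖x * e - x‖ ^ 2 = ‖star e * c - c‖ := by
        rw [sq, ← CStarRing.norm_star_mul_self, expand]
    _ ≤ ‖e‖ * ‖c‖ + ‖c‖ := by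
        grw [norm_sub_le, norm_mul_le, norm_star]
    _ ≤ 2 * ‖c‖ := by
        grw [he]
        linarith

lemma norm_mul_star_sub_sq_le (x : A) {e : A} (he : ‖e‖ ≤ 1) :
    ‖x * star e - x‖ ^ 2 ≤ 2 * (‖x‖ * ‖x * e - x‖) := by
  let _ := CStarAlgebra.spectralOrder A
  have := CStarAlgebra.spectralOrderedRing A
  set c := (x - x * e) * star x with hc
  have contract : x * (star e * e) * star x ≤ x * star x := by
    calc x * (star e * e) * star x ≤ ‖star e * e‖ • (x * star x) :=
          CStarAlgebra.star_right_conjugate_le_norm_smul (.star_mul_self e)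
      _ ≤ (1 : ℝ) • (x * star x) := by
          refine smul_le_smul_of_nonneg_right ?_ (mul_star_self_nonneg x)
          rw [CStarRing.norm_star_mul_self]
          exact mul_le_one₀ he (norm_nonneg e) he
      _ = x * star x := one_smul ℝ _
  have bound : (x * star e - x) * star (x * star e - x) ≤ c + star c := by
    calc (x * star e - x) * star (x * star e - x)
        = x * (star e * e) * star x - x * star x + (c + star c) := by
          simp only [hc, star_sub, star_mul, star_star, mul_sub, sub_mul, mul_assoc]
          abel
      _ ≤ c + star c := add_le_of_nonpos_left (sub_nonpos.2 contract)
  calc ‖x * star e - x‖ ^ 2 = ‖(x * star e - x) * star (x * star e - x)‖ := by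
        rw [sq, CStarRing.norm_self_mul_star]
    _ ≤ ‖c + star c‖ := CStarAlgebra.norm_le_norm_of_nonneg_of_le (mul_star_self_nonneg _) bound
    _ ≤ 2 * ‖c‖ := by
        grw [norm_add_le, norm_star, two_mul]
    _ ≤ 2 * (‖x‖ * ‖x * e - x‖) := by
        grw [hc, norm_mul_le, norm_star, norm_sub_rev, mul_comm ‖x‖]

lemma tendsto_of_norm_sub_sq_le {E ι : Type*} [SeminormedAddCommGroup E] {l : Filter ι}
    {f : ι → E} {x : E} {g : ι → ℝ} (hfg : ∀ i, ‖f i - x‖ ^ 2 ≤ g i)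
    (hg : Tendsto g l (𝓝 0)) : Tendsto f l (𝓝 x) := by
  rw [tendsto_iff_norm_sub_tendsto_zero]
  simpa using (squeeze_zero (fun i => sq_nonneg _) hfg hg).sqrt

lemma tendsto_mul_star_of_tendsto_mul {ι : Type*} {l : Filter ι} {e : ι → A}
    (he : ∀ i, ‖e i‖ ≤ 1) {x : A} (hx : Tendsto (fun i => x * e i) l (𝓝 x)) :
    Tendsto (fun i => x * star (e i)) l (𝓝 x) := by
  refine tendsto_of_norm_sub_sq_le (fun i => norm_mul_star_sub_sq_le x (he i)) ?_
  simpa using ((tendsto_iff_norm_sub_tendsto_zero.1 hx).const_mul ‖x‖).const_mul 2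

end NormEstimates

section Order

variable {A : Type*} [NonUnitalCStarAlgebra A]

lemma tendsto_star_approximateUnit_mul {l : Filter A} (hl : l.IsApproximateUnit) (b : A) :
    Tendsto (fun u => star u * b) l (𝓝 b) := by
  simpa using (hl.tendsto_mul_left (star b)).star

variable [PartialOrder A]

lemma tendsto_star_mul_mul_self {l : Filter A} (hl : l.IsIncreasingApproximateUnit) (b : A) :
    Tendsto (fun u => star u * b * u) l (𝓝 b) := by
  have small : Tendsto (fun u => (star u * b - b) * u) l (𝓝 0) := by
    have hb := (tendsto_star_approximateUnit_mul hl.toIsApproximateUnit b).sub_const b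
    rw [sub_self] at hb
    refine hb.zero_mul_isBoundedUnder_le ?_
    exact isBoundedUnder_of_eventually_le hl.eventually_norm
  simpa [sub_mul] using small.add (hl.tendsto_mul_left b)

variable [StarOrderedRing A]

/- In the unital case `star c * c = ‖b‖ - b` gives `‖a + ‖b‖ - b‖ ≤ ‖b‖`, hence `a ≤ b`. Here this
choice is compressed by `u`. -/
lemma star_mul_add_mul_le {a b : A} (ha : IsSelfAdjoint a) (hb : IsSelfAdjoint b)
    (h : ∀ c, ‖a + star c * c‖ ≤ ‖b + star c * c‖) {u : A} (hu : ‖u‖ ≤ 1) (d : A) :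
    star d * (a + (‖b‖ • (star u * u) - star u * b * u)) * d ≤
      (‖b‖ + ‖b - star u * b * u‖) • (star d * d) := by
  obtain ⟨c, hc⟩ := CStarAlgebra.nonneg_iff_eq_star_mul_self.1 <|
    sub_nonneg.2 (CStarAlgebra.star_left_conjugate_le_norm_smul (a := u) hb)
  have norm_le : ‖a + star c * c‖ ≤ ‖b‖ + ‖b - star u * b * u‖ := by
    calc ‖a + star c * c‖ ≤ ‖b + star c * c‖ := h c
      _ = ‖‖b‖ • (star u * u) + (b - star u * b * u)‖ := by
          rw [← hc]
          congr 1
          abel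
      _ ≤ ‖b‖ * (‖u‖ * ‖u‖) + ‖b - star u * b * u‖ := by
          grw [norm_add_le, norm_smul, norm_norm, CStarRing.norm_star_mul_self]
      _ ≤ ‖b‖ + ‖b - star u * b * u‖ := by
          grw [mul_le_one₀ hu (norm_nonneg u) hu, mul_one]
  rw [hc]
  calc star d * (a + star c * c) * d ≤ ‖a + star c * c‖ • (star d * d) :=
        CStarAlgebra.star_left_conjugate_le_norm_smul (ha.add (.star_mul_self c))
    _ ≤ (‖b‖ + ‖b - star u * b * u‖) • (star d * d) :=
        smul_le_smul_of_nonneg_right norm_le (star_mul_self_nonneg d)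

lemma star_mul_mul_self_le_of_forall_norm_le {a b : A} (ha : IsSelfAdjoint a)
    (hb : IsSelfAdjoint b) (h : ∀ c, ‖a + star c * c‖ ≤ ‖b + star c * c‖) (d : A) :
    star d * a * d ≤ star d * b * d := by
  set l := CStarAlgebra.approximateUnit A
  have hl : l.IsIncreasingApproximateUnit := CStarAlgebra.increasingApproximateUnit A
  have tendsto_left : Tendsto
      (fun u => star d * (a + (‖b‖ • (star u * u) - star u * b * u)) * d) l
      (𝓝 (star d * a * d + (‖b‖ • (star d * d) - star d * b * d))) := by
    have star_mul_star := ((hl.tendsto_mul_right d).star).congr fun u => star_mul u d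
    have conj (m : A) :
        Tendsto (fun u => star d * (star u * m * u) * d) l (𝓝 (star d * m * d)) := by
      simpa [mul_assoc] using (star_mul_star.mul_const m).mul (hl.tendsto_mul_right d)
    have conj_one : Tendsto (fun u => star d * (star u * u) * d) l (𝓝 (star d * d)) := by
      simpa [mul_assoc] using star_mul_star.mul (hl.tendsto_mul_right d)
    refine (((conj_one.const_smul ‖b‖).sub (conj b)).const_add (star d * a * d)).congr fun u => ?_
    simp only [mul_add, mul_sub, add_mul, sub_mul, mul_smul_comm, smul_mul_assoc]
  have tendsto_right : Tendsto (fun u => (‖b‖ + ‖b - star u * b * u‖) • (star d * d)) l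
      (𝓝 (‖b‖ • (star d * d))) := by
    simpa using
      (((tendsto_star_mul_mul_self hl b).const_sub b).norm.const_add ‖b‖).smul_const (star d * d)
  have limit_le := le_of_tendsto_of_tendsto tendsto_left tendsto_right <|
    hl.eventually_norm.mono fun u hu => star_mul_add_mul_le ha hb h hu d
  rw [add_sub_left_comm] at limit_le
  exact sub_nonpos.1 (nonpos_of_add_le_right limit_le)

theorem le_of_forall_norm_add_star_mul_self_le {a b : A} (ha : IsSelfAdjoint a)
    (hb : IsSelfAdjoint b) (h : ∀ c, ‖a + star c * c‖ ≤ ‖b + star c * c‖) : a ≤ b :=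
  have hl := CStarAlgebra.increasingApproximateUnit A
  le_of_tendsto_of_tendsto' (tendsto_star_mul_mul_self hl a) (tendsto_star_mul_mul_self hl b)
    (star_mul_mul_self_le_of_forall_norm_le ha hb h)

end Order

theorem eq_of_forall_norm_add_star_mul_self_eq {A : Type*} [NonUnitalCStarAlgebra A] {a b : A}
    (ha : IsSelfAdjoint a) (hb : IsSelfAdjoint b)
    (h : ∀ c, ‖a + star c * c‖ = ‖b + star c * c‖) : a = b := by
  let _ := CStarAlgebra.spectralOrder A
  have := CStarAlgebra.spectralOrderedRing A
  exact le_antisymm (le_of_forall_norm_add_star_mul_self_le ha hb fun c => (h c).le)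
    (le_of_forall_norm_add_star_mul_self_le hb ha fun c => (h c).ge)

section Polarization

variable {B : Type*} [NonUnitalRing B] [StarRing B] [Module ℂ B] [StarModule ℂ B]
  [IsScalarTower ℂ B B] [SMulCommClass ℂ B B]

lemma four_smul_star_mul (x y : B) :
    (4 : ℂ) • (star x * y) =
      star (x + y) * (x + y) - star (x - y) * (x - y)
        - Complex.I • (star (x + Complex.I • y) * (x + Complex.I • y))
        + Complex.I • (star (x - Complex.I • y) * (x - Complex.I • y)) := by
  simp only [star_add, star_sub, star_smul, add_mul, mul_add, sub_mul, mul_sub, smul_mul_assoc,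
    mul_smul_comm, smul_add, smul_sub, smul_smul, Complex.star_def, Complex.conj_I, neg_mul,
    Complex.I_mul_I, neg_neg, neg_smul, one_smul, smul_neg]
  module

lemma star_mul_eq_of_star_mul_self_eq {V : Type*} [AddCommGroup V] [Module ℂ V]
    {f g : V →ₗ[ℂ] B} (h : ∀ x, star (f x) * f x = star (g x) * g x) (x y : V) :
    star (f x) * f y = star (g x) * g y := by
  refine smul_right_injective B (by norm_num : (4 : ℂ) ≠ 0) ?_
  simp only [four_smul_star_mul, ← map_smul, ← map_add, ← map_sub, h]

end Polarization

/-- A complex subspace `I` of `A` absorbing multiplication from the left. It is a predicate on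
`Submodule ℂ A` because `A` need not have a unit. -/
def IsLeftIdeal {A : Type*} [NonUnitalCStarAlgebra A] (I : Submodule ℂ A) : Prop :=
  ∀ a : A, ∀ x ∈ I, a * x ∈ I

namespace IsLeftIdeal

variable {A : Type*} [NonUnitalCStarAlgebra A] {I : Submodule ℂ A} (hI : IsLeftIdeal I)

/-- Left multiplication by `a` as an operator on the left ideal. -/
def leftMul (a : A) : I →ₗ[ℂ] I :=
  (LinearMap.mulLeft ℂ a).restrict (hI a)

@[simp]
lemma coe_leftMul (a : A) (x : I) : (hI.leftMul a x : A) = a * x := rfl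

/-- Left multiplication by an element of the unitization of `A`, which is where unitaries live, as
an operator on the left ideal. -/
def unitizationMul (w : Unitization ℂ A) : I →ₗ[ℂ] I :=
  w.fst • LinearMap.id + hI.leftMul w.snd

lemma inr_unitizationMul (w : Unitization ℂ A) (x : I) :
    ((hI.unitizationMul w x : A) : Unitization ℂ A) = w * (x : A) := by
  ext <;> simp [unitizationMul]

lemma unitizationMul_inr (a : A) : hI.unitizationMul (a : Unitization ℂ A) = hI.leftMul a := by
  simp [unitizationMul]

lemma unitizationMul_zero : hI.unitizationMul 0 = 0 := by
  ext x
  simp [unitizationMul]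

lemma unitizationMul_add (w w' : Unitization ℂ A) :
    hI.unitizationMul (w + w') = hI.unitizationMul w + hI.unitizationMul w' := by
  ext x
  simp [unitizationMul, add_smul, add_mul, add_add_add_comm]

lemma unitizationMul_smul (c : ℂ) (w : Unitization ℂ A) :
    hI.unitizationMul (c • w) = c • hI.unitizationMul w := by
  ext x
  simp [unitizationMul, mul_smul, smul_mul_assoc]

lemma unitizationMul_mul_star_apply {u : Unitization ℂ A} (hu : u ∈ unitary (Unitization ℂ A))
    (x : I) : hI.unitizationMul u (hI.unitizationMul (star u) x) = x := by
  apply Subtype.ext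
  apply Unitization.inr_injective (R := ℂ)
  rw [inr_unitizationMul, inr_unitizationMul, ← mul_assoc, Unitary.mul_star_self_of_mem hu, one_mul]

lemma star_unitizationMul_mul_self {u : Unitization ℂ A} (hu : u ∈ unitary (Unitization ℂ A))
    (x : I) :
    star (hI.unitizationMul u x : A) * hI.unitizationMul u x = star (x : A) * x := by
  apply Unitization.inr_injective (R := ℂ)
  rw [Unitization.inr_mul, Unitization.inr_star, inr_unitizationMul, star_mul, mul_assoc,
    ← mul_assoc (star u), Unitary.star_mul_self_of_mem hu, one_mul, Unitization.inr_mul,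
    Unitization.inr_star]

/-- The C*-algebra `I ∩ I*` of a left ideal `I`. -/
def starSubalgebra : NonUnitalStarSubalgebra ℂ A where
  carrier := {x | x ∈ I ∧ star x ∈ I}
  add_mem' hx hy := ⟨I.add_mem hx.1 hy.1, by
    rw [star_add]
    exact I.add_mem hx.2 hy.2⟩
  zero_mem' := ⟨I.zero_mem, by simp⟩
  mul_mem' hx hy := ⟨hI _ _ hy.1, by
    rw [star_mul]
    exact hI _ _ hx.2⟩
  smul_mem' c x hx := ⟨I.smul_mem c hx.1, by
    rw [star_smul]
    exact I.smul_mem _ hx.2⟩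
  star_mem' hx := ⟨hx.2, by simpa using hx.1⟩

lemma star_mul_self_mem_starSubalgebra (x : I) : star (x : A) * x ∈ hI.starSubalgebra :=
  ⟨hI _ _ x.2, by simpa using hI _ _ x.2⟩

lemma isClosed_starSubalgebra (hIc : IsClosed (I : Set A)) :
    IsClosed (hI.starSubalgebra : Set A) :=
  hIc.inter (hIc.preimage continuous_star)

end IsLeftIdeal

/-- `e` is a right contractive approximate identity of `I` along the filter `l`. -/
structure IsRCAI {A ι : Type*} [NonUnitalCStarAlgebra A] (I : Submodule ℂ A) (l : Filter ι)
    (e : ι → I) : Prop where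
  norm_le (i : ι) : ‖(e i : A)‖ ≤ 1
  tendsto_mul (x : A) (hx : x ∈ I) : Tendsto (fun i => x * (e i : A)) l (𝓝 x)

lemma IsRCAI.tendsto_mul_star {A ι : Type*} [NonUnitalCStarAlgebra A] {I : Submodule ℂ A}
    {l : Filter ι} {e : ι → I} (he : IsRCAI I l e) (x : A) (hx : x ∈ I) :
    Tendsto (fun i => x * star (e i : A)) l (𝓝 x) :=
  tendsto_mul_star_of_tendsto_mul he.norm_le (he.tendsto_mul x hx)

section Existence

/-- The index set of the canonical approximate unit of a C*-algebra: its positive elements of norm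
less than one, ordered as elements of the algebra. -/
abbrev PositiveBall (A : Type*) [NonUnitalCStarAlgebra A] [PartialOrder A] : Type _ :=
  {x : A // x ∈ {x : A | 0 ≤ x} ∩ Metric.ball 0 1}

lemma isDirected_positiveBall (A : Type*) [NonUnitalCStarAlgebra A] [PartialOrder A]
    [StarOrderedRing A] : IsDirected (PositiveBall A) (· ≤ ·) :=
  ⟨fun a b =>
    have ⟨c, hc, hac, hbc⟩ := CStarAlgebra.directedOn_nonneg_ball a.1 a.2 b.1 b.2
    ⟨⟨c, hc⟩, hac, hbc⟩⟩

lemma tendsto_positiveBall_atTop (A : Type*) [NonUnitalCStarAlgebra A] [PartialOrder A]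
    [StarOrderedRing A] :
    Tendsto (fun u : PositiveBall A => (u : A)) atTop (CStarAlgebra.approximateUnit A) := by
  rw [(CStarAlgebra.hasBasis_approximateUnit A).tendsto_right_iff]
  intro a ha
  filter_upwards [eventually_ge_atTop (⟨a, ha.1, by simpa using ha.2⟩ : PositiveBall A)] with u hu
  exact ⟨hu, Metric.ball_subset_closedBall u.2.2⟩

theorem exists_directedNet_isRCAI {A : Type u} [NonUnitalCStarAlgebra A] {I : Submodule ℂ A}
    (hIc : IsClosed (I : Set A)) (hI : IsLeftIdeal I) :
    ∃ N : DirectedNet.{u} I, IsRCAI I atTop N.elem := by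
  let D := hI.starSubalgebra
  have hD : IsClosed (D : Set A) := hI.isClosed_starSubalgebra hIc
  let _ := CStarAlgebra.spectralOrder D
  have := CStarAlgebra.spectralOrderedRing D
  have norm_le (u : PositiveBall D) : ‖(u.1 : A)‖ ≤ 1 := (mem_ball_zero_iff.1 u.2.2).le
  have : Nonempty (PositiveBall D) := ⟨⟨0, by simp⟩⟩
  refine ⟨⟨PositiveBall D, isDirected_positiveBall D, fun u => ⟨u.1, u.1.2.1⟩⟩, norm_le,
    fun x hx => tendsto_of_norm_sub_sq_le (fun u => norm_mul_sub_sq_le x (norm_le u)) ?_⟩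
  let d : D := ⟨star x * x, hI.star_mul_self_mem_starSubalgebra ⟨x, hx⟩⟩
  have tendsto_d : Tendsto (fun u : PositiveBall D => d * u.1) atTop (𝓝 d) :=
    ((CStarAlgebra.increasingApproximateUnit D).tendsto_mul_left d).comp
      (tendsto_positiveBall_atTop D)
  simpa using (tendsto_iff_norm_sub_tendsto_zero.1 tendsto_d).const_mul 2

end Existence

section ColumnNorm

variable {A : Type*} [NonUnitalCStarAlgebra A]

lemma norm_apply_le_one_of_norm_sum_le_one {ι : Type*} [Fintype ι] {v : ι → A}
    (hv : ‖∑ i, star (v i) * v i‖ ≤ 1) (k : ι) : ‖v k‖ ≤ 1 := by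
  let _ := CStarAlgebra.spectralOrder A
  have := CStarAlgebra.spectralOrderedRing A
  have single_le : star (v k) * v k ≤ ∑ i, star (v i) * v i :=
    Finset.single_le_sum (f := fun i => star (v i) * v i)
      (fun i _ => star_mul_self_nonneg _) (Finset.mem_univ k)
  have norm_le := CStarAlgebra.norm_le_norm_of_nonneg_of_le (star_mul_self_nonneg _) single_le
  rw [CStarRing.norm_star_mul_self] at norm_le
  nlinarith [norm_nonneg (v k)]

lemma exists_norm_le_one_norm_mul_eq (s : A) : ∃ w : A, ‖w‖ ≤ 1 ∧ ‖s * w‖ = ‖s‖ := by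
  refine ⟨((‖s‖⁻¹ : ℝ) : ℂ) • star s, ?_, ?_⟩
  · simpa [norm_smul] using inv_mul_le_one
  · rw [mul_smul_comm, norm_smul, CStarRing.norm_self_mul_star]
    by_cases hs : ‖s‖ = 0 <;> simp [hs]

/- With `∑ i, star (c i) * c i = star s * s`, the column acts on `v` with the same norm as `s` does
on `v k`. -/
lemma cnorm_updateCol_zero {n : ℕ} (c : Fin n → A) (k : Fin n) :
    cnorm (Matrix.updateCol 0 k c) = √‖∑ i, star (c i) * c i‖ := by
  let _ := CStarAlgebra.spectralOrder A
  have := CStarAlgebra.spectralOrderedRing A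
  obtain ⟨s, hs⟩ := CStarAlgebra.nonneg_iff_eq_star_mul_self.1 <|
    Finset.sum_nonneg fun i (_ : i ∈ Finset.univ) => star_mul_self_nonneg (c i)
  have mulVec_apply (v : Fin n → A) (i : Fin n) :
      (Matrix.updateCol 0 k c).mulVec v i = c i * v k := by
    simp [Matrix.mulVec, dotProduct, Matrix.updateCol_apply]
  have sqrt_norm (x : A) : √‖star x * x‖ = ‖x‖ := by
    rw [CStarRing.norm_star_mul_self, Real.sqrt_mul_self (norm_nonneg x)]
  have column_norm (v : Fin n → A) :
      √‖∑ i, star ((Matrix.updateCol 0 k c).mulVec v i) * (Matrix.updateCol 0 k c).mulVec v i‖ =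
        ‖s * v k‖ := by
    have gram : ∑ i, star (c i * v k) * (c i * v k) = star (s * v k) * (s * v k) := by
      simp only [star_mul, mul_assoc, ← Finset.mul_sum]
      rw [← mul_assoc (star s), ← hs, Finset.sum_mul]
      simp only [mul_assoc]
    simp only [mulVec_apply, gram, sqrt_norm]
  rw [hs, sqrt_norm]
  refine IsGreatest.csSup_eq ⟨?_, ?_⟩
  · obtain ⟨w, hw, hsw⟩ := exists_norm_le_one_norm_mul_eq s
    refine ⟨Pi.single k w, ?_, ?_⟩
    · rw [Finset.sum_eq_single k (fun i _ hi => by simp [hi]) (by simp), Pi.single_eq_same,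
        CStarRing.norm_star_mul_self]
      exact mul_le_one₀ hw (norm_nonneg w) hw
    · rw [column_norm, Pi.single_eq_same, hsw]
  · rintro _ ⟨v, hv, rfl⟩
    rw [column_norm]
    grw [norm_mul_le, norm_apply_le_one_of_norm_sum_le_one hv k, mul_one]

end ColumnNorm

/-- `T` preserves the norms of columns of length `n`, where the norm of a column over a C*-algebra
is its norm as an element of the Hilbert module `Aⁿ`; it is recorded here through its square. -/
def IsColumnIsometric {A B : Type*} [NonUnitalCStarAlgebra A] [NonUnitalCStarAlgebra B] (n : ℕ)
    {V : Submodule ℂ A} (T : V → B) : Prop :=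
  ∀ x : Fin n → V, ‖∑ i, star (T (x i)) * T (x i)‖ = ‖∑ i, star (x i : A) * x i‖

section ColumnIsometric

variable {A B : Type*} [NonUnitalCStarAlgebra A] [NonUnitalCStarAlgebra B] {V : Submodule ℂ A}
  {T : V → B}

theorem IsCompletelyIsometric.isColumnIsometric (hT : IsCompletelyIsometric T) (hT₀ : T 0 = 0)
    (n : ℕ) : IsColumnIsometric n T := by
  intro x
  cases n with
  | zero => simp
  | succ n =>
    have h := hT (n + 1) (Matrix.updateCol 0 0 x)
    rw [Matrix.map_updateCol, Matrix.map_updateCol, Matrix.map_zero _ hT₀,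
      Matrix.map_zero _ V.coe_zero, cnorm_updateCol_zero, cnorm_updateCol_zero] at h
    exact (Real.sqrt_inj (norm_nonneg _) (norm_nonneg _)).1 h

lemma IsColumnIsometric.norm_map {n : ℕ} (hT : IsColumnIsometric n T) (hT₀ : T 0 = 0) (k : Fin n)
    (x : V) : ‖T x‖ = ‖x‖ := by
  have h := hT (Pi.single k x)
  rw [Finset.sum_eq_single k (fun i _ hi => by simp [hi, hT₀]) (by simp),
    Finset.sum_eq_single k (fun i _ hi => by simp [hi]) (by simp), Pi.single_eq_same,
    CStarRing.norm_star_mul_self, CStarRing.norm_star_mul_self] at h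
  exact (mul_self_inj (norm_nonneg _) (norm_nonneg _)).1 h

end ColumnIsometric

namespace IsColumnIsometric

variable {A B : Type*} [NonUnitalCStarAlgebra A] [NonUnitalCStarAlgebra B] {I : Submodule ℂ A}
  {J : Submodule ℂ B} {φ : I ≃ₗᵢ[ℂ] J}

lemma symm {n : ℕ} (hφ : IsColumnIsometric n fun x => (φ x : B)) :
    IsColumnIsometric n fun y => (φ.symm y : A) := fun y => by
  simpa using (hφ fun i => φ.symm (y i)).symm

lemma star_map_mul_self_eq (hφ : IsColumnIsometric 2 fun x => (φ x : B))
    (hJc : IsClosed (J : Set B)) (hJ : IsLeftIdeal J) {x y : I}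
    (hxy : star (x : A) * x = star (y : A) * y) :
    star (φ x : B) * φ x = star (φ y : B) * φ y := by
  have hD : IsClosed (hJ.starSubalgebra : Set B) := hJ.isClosed_starSubalgebra hJc
  let gram (z : I) : hJ.starSubalgebra := ⟨_, hJ.star_mul_self_mem_starSubalgebra (φ z)⟩
  have gram_isSelfAdjoint (z : I) : IsSelfAdjoint (gram z) :=
    Subtype.ext (IsSelfAdjoint.star_mul_self (φ z : B))
  have norm_gram_add (z : I) (c : hJ.starSubalgebra) : ‖gram z + star c * c‖ =
      ‖star (z : A) * z + star (φ.symm ⟨c, c.2.1⟩ : A) * φ.symm ⟨c, c.2.1⟩‖ := by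
    simpa [Fin.sum_univ_two] using hφ ![z, φ.symm ⟨c, c.2.1⟩]
  exact congrArg Subtype.val <| eq_of_forall_norm_add_star_mul_self_eq (gram_isSelfAdjoint x)
    (gram_isSelfAdjoint y) fun c => by rw [norm_gram_add, norm_gram_add, hxy]

lemma star_map_mul_map_unitary (hφ : IsColumnIsometric 2 fun x => (φ x : B))
    (hI : IsLeftIdeal I) (hJc : IsClosed (J : Set B)) (hJ : IsLeftIdeal J)
    {u : Unitization ℂ A} (hu : u ∈ unitary (Unitization ℂ A)) (x y : I) :
    star (φ x : B) * φ (hI.unitizationMul u y) =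
      star (φ (hI.unitizationMul (star u) x) : B) * φ y := by
  let g : I →ₗ[ℂ] B := J.subtype ∘ₗ φ.toLinearEquiv.toLinearMap
  have polarized := star_mul_eq_of_star_mul_self_eq (f := g ∘ₗ hI.unitizationMul u) (g := g)
    (fun z => hφ.star_map_mul_self_eq hJc hJ (hI.star_unitizationMul_mul_self hu z))
    (hI.unitizationMul (star u) x) y
  simpa [g, hI.unitizationMul_mul_star_apply hu] using polarized

theorem star_map_mul_map_leftMul (hφ : IsColumnIsometric 2 fun x => (φ x : B))
    (hI : IsLeftIdeal I) (hJc : IsClosed (J : Set B)) (hJ : IsLeftIdeal J) (a : A) (x y : I) :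
    star (φ x : B) * φ (hI.leftMul a y) = star (φ (hI.leftMul (star a) x) : B) * φ y := by
  suffices adjoint : ∀ w : Unitization ℂ A, star (φ x : B) * φ (hI.unitizationMul w y) =
      star (φ (hI.unitizationMul (star w) x) : B) * φ y by
    simpa only [← Unitization.inr_star, IsLeftIdeal.unitizationMul_inr] using adjoint a
  intro w
  have hw : w ∈ Submodule.span ℂ (unitary (Unitization ℂ A) : Set (Unitization ℂ A)) := by
    rw [CStarAlgebra.span_unitary]
    trivial
  induction hw using Submodule.span_induction with
  | mem u hu => exact hφ.star_map_mul_map_unitary hI hJc hJ hu x y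
  | zero => simp [IsLeftIdeal.unitizationMul_zero]
  | add w w' _ _ hw hw' => simp [IsLeftIdeal.unitizationMul_add, mul_add, add_mul, hw, hw']
  | smul c w _ hw => simp [IsLeftIdeal.unitizationMul_smul, mul_smul_comm, smul_mul_assoc, hw]

section ApproximateIdentity

variable {ι : Type*} {l : Filter ι} [l.NeBot] {e : ι → I}

theorem mul_map_leftMul_star (hφ : IsColumnIsometric 2 fun x => (φ x : B)) (hI : IsLeftIdeal I)
    (hJc : IsClosed (J : Set B)) (hJ : IsLeftIdeal J) (he : IsRCAI I l e)
    (hφe : IsRCAI J l fun i => φ (e i)) (x y : I) {z : B} (hz : z ∈ J) :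
    z * φ (hI.leftMul (star (x : A)) y) = z * (star (φ x : B) * φ y) := by
  have compressed (i : ι) :
      z * star (φ (e i) : B) * φ (hI.leftMul (star (x : A)) y) =
        z * (star (φ (hI.leftMul x (e i)) : B) * φ y) := by
    rw [mul_assoc, hφ.star_map_mul_map_leftMul hI hJc hJ, star_star]
  have tendsto_left := (hφe.tendsto_mul_star z hz).mul_const
    (φ (hI.leftMul (star (x : A)) y) : B)
  have tendsto_x : Tendsto (fun i => hI.leftMul (x : A) (e i)) l (𝓝 x) :=
    tendsto_subtype_rng.2 (he.tendsto_mul x x.2)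
  have tendsto_map_x : Tendsto (fun i => (φ (hI.leftMul (x : A) (e i)) : B)) l (𝓝 (φ x : B)) :=
    tendsto_subtype_rng.1 ((φ.continuous.tendsto x).comp tendsto_x)
  exact tendsto_nhds_unique (tendsto_left.congr compressed)
    ((tendsto_map_x.star.mul_const (φ y : B)).const_mul z)

theorem map_leftMul_mul_star (hφ : IsColumnIsometric 2 fun x => (φ x : B))
    (hIc : IsClosed (I : Set A)) (hI : IsLeftIdeal I) (hJc : IsClosed (J : Set B))
    (hJ : IsLeftIdeal J) (he : IsRCAI I l e) (hφe : IsRCAI J l fun i => φ (e i)) (x a y : I) :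
    (φ (hI.leftMul (x * star (a : A)) y) : B) = φ x * star (φ a : B) * φ y := by
  let d : J := hJ.leftMul (star (φ a : B)) (φ y)
  have star_d_mem : star (d : B) ∈ J := by
    simpa [d] using hJ (star (φ y : B)) _ (φ a).2
  have triple_eq : hI.leftMul (x * star (a : A)) y = hI.leftMul x (φ.symm d) := by
    have h := hφ.symm.mul_map_leftMul_star hJ hIc hI hφe (by simpa using he) (φ a) (φ y) x.2
    exact Subtype.ext (by simpa [d, mul_assoc] using h.symm)
  have tested (s : I) :
      star (φ s : B) * φ (hI.leftMul x (φ.symm d)) = star (φ s : B) * (φ x * d) := by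
    have h := hφ.mul_map_leftMul_star hI hJc hJ he hφe x s star_d_mem
    rw [hφ.star_map_mul_map_leftMul hI hJc hJ, φ.apply_symm_apply]
    simpa [mul_assoc] using congrArg star h
  let defect : J := φ (hI.leftMul x (φ.symm d)) - hJ.leftMul (φ x) d
  have defect_eq_zero : (defect : B) = 0 := by
    rw [← CStarRing.star_mul_self_eq_zero_iff]
    simpa [defect, mul_sub, sub_eq_zero] using tested (φ.symm defect)
  rw [triple_eq, mul_assoc]
  exact sub_eq_zero.1 defect_eq_zero

theorem map_leftMul (hφ : IsColumnIsometric 2 fun x => (φ x : B))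
    (hIc : IsClosed (I : Set A)) (hI : IsLeftIdeal I) (hJc : IsClosed (J : Set B))
    (hJ : IsLeftIdeal J) (he : IsRCAI I l e) (hφe : IsRCAI J l fun i => φ (e i)) (x y : I) :
    (φ (hI.leftMul x y) : B) = φ x * φ y := by
  have tendsto_xy : Tendsto (fun i => hI.leftMul (x * star (e i : A)) y) l
      (𝓝 (hI.leftMul x y)) :=
    tendsto_subtype_rng.2 ((he.tendsto_mul_star x x.2).mul_const (y : A))
  have tendsto_map_xy : Tendsto (fun i => (φ (hI.leftMul (x * star (e i : A)) y) : B)) l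
      (𝓝 (φ (hI.leftMul x y) : B)) :=
    tendsto_subtype_rng.1 ((φ.continuous.tendsto _).comp tendsto_xy)
  refine tendsto_nhds_unique tendsto_map_xy
    (((hφe.tendsto_mul_star (φ x) (φ x).2).mul_const (φ y : B)).congr fun i => ?_)
  rw [hφ.map_leftMul_mul_star hIc hI hJc hJ he hφe]

end ApproximateIdentity

end IsColumnIsometric

lemma IsRCAI.map_of_multiplicative {A B ι : Type*} [NonUnitalCStarAlgebra A]
    [NonUnitalCStarAlgebra B] {I : Submodule ℂ A} {J : Submodule ℂ B} {φ : I ≃ₗᵢ[ℂ] J}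
    (hI : IsLeftIdeal I) (hmul : ∀ x y : I, (φ (hI.leftMul x y) : B) = φ x * φ y)
    {l : Filter ι} {e : ι → I} (he : IsRCAI I l e) : IsRCAI J l fun i => φ (e i) where
  norm_le i := (φ.norm_map (e i)).trans_le (he.norm_le i)
  tendsto_mul y hy := by
    obtain ⟨x, hx⟩ := φ.surjective ⟨y, hy⟩
    obtain rfl : (φ x : B) = y := congrArg Subtype.val hx
    have tendsto_x : Tendsto (fun i => hI.leftMul (x : A) (e i)) l (𝓝 x) :=
      tendsto_subtype_rng.2 (he.tendsto_mul x x.2)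
    exact (tendsto_subtype_rng.1 ((φ.continuous.tendsto x).comp tendsto_x)).congr
      fun i => hmul x (e i)

theorem multiplicative_iff_maps_rcai_to_rcai_general
    {A : Type u} {B : Type v} [NonUnitalCStarAlgebra A] [NonUnitalCStarAlgebra B]
    (I : Submodule ℂ A) (hIc : IsClosed (I : Set A)) (hI : ∀ a : A, ∀ x ∈ I, a * x ∈ I)
    (J : Submodule ℂ B) (hJc : IsClosed (J : Set B)) (hJ : ∀ b : B, ∀ y ∈ J, b * y ∈ J)
    (φ : I →ₗ[ℂ] J) (hbij : Function.Bijective φ)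
    (hφ : IsColumnIsometric 2 (fun x => (φ x : B))) :
    (∀ x y z : I, (z : A) = (x : A) * (y : A) → (φ z : B) = (φ x : B) * (φ y : B)) ↔
      ∃ N : DirectedNet.{u} I,
        (∀ i, ‖(N.elem i : A)‖ ≤ 1) ∧
        (∀ x ∈ I, Tendsto (fun i => ‖x * (N.elem i : A) - x‖) atTop (𝓝 0)) ∧
        (∀ y ∈ J, Tendsto (fun i => ‖y * (φ (N.elem i) : B) - y‖) atTop (𝓝 0)) := by
  let ψ : I ≃ₗᵢ[ℂ] J := ⟨LinearEquiv.ofBijective φ hbij, hφ.norm_map (by simp) 0⟩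
  simp only [← tendsto_iff_norm_sub_tendsto_zero]
  constructor
  · intro hmul
    obtain ⟨N, hN⟩ := exists_directedNet_isRCAI hIc hI
    have hφN : IsRCAI J atTop fun i => ψ (N.elem i) :=
      hN.map_of_multiplicative hI fun x y => hmul x y _ rfl
    exact ⟨N, hN.norm_le, hN.tendsto_mul, hφN.tendsto_mul⟩
  · rintro ⟨N, norm_le, tendsto_I, tendsto_J⟩ x y z hz
    have := N.dir
    have hφN : IsRCAI J atTop fun i => ψ (N.elem i) :=
      ⟨fun i => (ψ.norm_map _).trans_le (norm_le i), tendsto_J⟩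
    obtain rfl : z = IsLeftIdeal.leftMul hI x y := Subtype.ext hz
    exact IsColumnIsometric.map_leftMul (φ := ψ) hφ hIc hI hJc hJ ⟨norm_le, tendsto_I⟩ hφN x y

theorem multiplicative_iff_maps_rcai_to_rcai
    {A : Type u} {B : Type v} [NonUnitalCStarAlgebra A] [NonUnitalCStarAlgebra B]
    (I : Submodule ℂ A) (hIc : IsClosed (I : Set A)) (hI : ∀ a : A, ∀ x ∈ I, a * x ∈ I)
    (J : Submodule ℂ B) (hJc : IsClosed (J : Set B)) (hJ : ∀ b : B, ∀ y ∈ J, b * y ∈ J)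
    (φ : I →ₗ[ℂ] J) (hbij : Function.Bijective φ)
    (hci : IsCompletelyIsometric (fun x => (φ x : B))) :
    (∀ x y z : I, (z : A) = (x : A) * (y : A) → (φ z : B) = (φ x : B) * (φ y : B)) ↔
      ∃ N : DirectedNet.{u} I,
        (∀ i, ‖(N.elem i : A)‖ ≤ 1) ∧
        (∀ x ∈ I, Tendsto (fun i => ‖x * (N.elem i : A) - x‖) atTop (𝓝 0)) ∧
        (∀ y ∈ J, Tendsto (fun i => ‖y * (φ (N.elem i) : B) - y‖) atTop (𝓝 0)) := by
  exact multiplicative_iff_maps_rcai_to_rcai_general I hIc hI J hJc hJ φ hbij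
    (hci.isColumnIsometric (by simp) 2)
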